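/- Let g ⊆ Derivation ℂ R R be the ℂ-linear span of all Θ_{a,b} (a ≠ b in Fin n) together with all Ξ_a (a with successor a+1 in Fin n). Define L_n := the ℂ-linear span of { f • Θ : f ∈ R, Θ ∈ g }, and define A_n := the Lie subalgebra of Derivation ℂ R R generated by the set { μ • Θ : Θ ∈ g, μ ∈ R a monomial (a single monomial with coefficient 1) of total degree at most 2 such that Θ(Θ(μ)) = 0 }. Then L_n and A_n coincide as subsets of Derivation ℂ R R. (Proposition 4.5 of the paper: the Lie algebra generated by the sl_n-overshear fields with monomial coefficients of degree at most 2 equals the module of all polynomial multiples of fundamental fields of the sl_n-action.) -/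

import Mathlib

open MvPolynomial

/-!
Write `X` for the generic matrix. The field `Theta a b`, which makes sense for `a = b` as well, is
the fundamental field `X ↦ [E_ab, X]`, and `Xi a a' = Theta a a - Theta a' a'`. Since
`∑ a, Theta a a = 0`, the space `slFields n` is spanned by all `Theta a b`, and it is closed under
brackets; hence the polynomial multiples of its members form a Lie algebra, which contains every
generator of `A_n`.

For the converse, let `A` be a Lie algebra containing the generators. In degrees 0, 1 and 2 only
the overshears `Θ_ab`, `x_ii Θ_ab` and `x_ii x_jj Θ_kk` are needed (`degree_one`, `degree_two`).
The tool is the identity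
`[p D, q r E] - [p q D, r E] = p r (E(q) D + D(q) E)` (`overshear_trick`).

Suppose all `f D` with `deg f ≤ d`, `d ≥ 2`, lie in `A`, and let `F` have degree `d`.
The identity gives `F (E(q) D + D(q) E) ∈ A` for every linear form `q`. Working modulo `A`, these
relations turn every `F v Θ_ab` with `v` a traceless linear form into a multiple of a single class
`z`, the common class of the elements `F x_ab Θ_ab`, `a ≠ b`. The tautology
`[X, X] = 0`, that is `∑ x_ij Θ_ij = 0`, then reads `(n² - 1) z = 0`, so `z = 0`
(`traceless_vanish`). The remaining multiples `F (tr X) D` are obtained from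
`[F D, (tr X) E] = F (tr X) [D, E] - (tr X) E(F) D`, because `tr X` is invariant and `E(F)` is a
sum of products with a traceless linear factor (`step`).
-/

/-- The polynomial ring in the `n²` matrix entries. -/
abbrev MatPoly (n : ℕ) := MvPolynomial (Fin n × Fin n) ℂ

/-- The fundamental vector field `Θ_{a,b}` of the conjugation action. -/
noncomputable def Theta {n : ℕ} (a b : Fin n) : Derivation ℂ (MatPoly n) (MatPoly n) :=
  ∑ k : Fin n,
    ((X (b, k) : MatPoly n) • (pderiv (a, k) : Derivation ℂ (MatPoly n) (MatPoly n))
      - (X (k, a) : MatPoly n) • (pderiv (k, b) : Derivation ℂ (MatPoly n) (MatPoly n)))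

/-- The hyperbolic vector field `Ξ_a`, where `a'` denotes the successor `a + 1`. -/
noncomputable def Xi {n : ℕ} (a a' : Fin n) : Derivation ℂ (MatPoly n) (MatPoly n) :=
  ∑ k : Fin n,
    ((X (a, k) : MatPoly n) • (pderiv (a, k) : Derivation ℂ (MatPoly n) (MatPoly n))
      - (X (a', k) : MatPoly n) • (pderiv (a', k) : Derivation ℂ (MatPoly n) (MatPoly n))
      - (X (k, a) : MatPoly n) • (pderiv (k, a) : Derivation ℂ (MatPoly n) (MatPoly n))
      + (X (k, a') : MatPoly n) • (pderiv (k, a') : Derivation ℂ (MatPoly n) (MatPoly n)))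

/-- The span of the fundamental vector fields of the `sl_n`-action: the image of `sl_n`
under the fundamental-vector-field map. -/
noncomputable def slFields (n : ℕ) : Submodule ℂ (Derivation ℂ (MatPoly n) (MatPoly n)) :=
  Submodule.span ℂ
    { D | (∃ a b : Fin n, a ≠ b ∧ D = Theta a b) ∨
          (∃ a a' : Fin n, (a' : ℕ) = (a : ℕ) + 1 ∧ D = Xi a a') }

/-! ### Fundamental fields and their brackets -/

lemma der_sum_apply {n : ℕ} {ι : Type*} (s : Finset ι)
    (D : ι → Derivation ℂ (MatPoly n) (MatPoly n)) (f : MatPoly n) :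
    (∑ i ∈ s, D i) f = ∑ i ∈ s, D i f := by
  classical
  induction s using Finset.induction_on with
  | empty => simp
  | insert i s hi ih => rw [Finset.sum_insert hi, Finset.sum_insert hi, Derivation.add_apply, ih]

/-- `Theta a b` sends the generic matrix `X` to `[E_ab, X]`. -/
lemma Theta_X {n : ℕ} (a b i j : Fin n) :
    Theta a b (X (i, j)) = (if i = a then X (b, j) else 0) - (if j = b then X (i, a) else 0) := by
  simp only [Theta, der_sum_apply, Derivation.sub_apply,
    Derivation.smul_apply, pderiv_X, Pi.single_apply, smul_eq_mul, Prod.mk.injEq,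
    Finset.sum_sub_distrib]
  congr 1
  · by_cases h : i = a <;> simp [h]
  · by_cases h : j = b <;> simp [h]

/-- `[Θ_ab, Θ_cd]` is the fundamental field of `-[E_ab, E_cd]`. -/
lemma Theta_lie {n : ℕ} (a b c d : Fin n) :
    ⁅(Theta a b : Derivation ℂ (MatPoly n) (MatPoly n)), Theta c d⁆ =
      (if d = a then Theta c b else 0) - (if b = c then Theta a d else 0) := by
  apply MvPolynomial.derivation_ext
  rintro ⟨i, j⟩
  rw [Derivation.commutator_apply]
  have h (P : Prop) [Decidable P] (D : Derivation ℂ (MatPoly n) (MatPoly n)) (f : MatPoly n) :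
    (if P then D else 0) f = if P then D f else 0 := by split_ifs <;> simp
  have h2 (P : Prop) [Decidable P] (D : Derivation ℂ (MatPoly n) (MatPoly n)) (f : MatPoly n) :
    D (if P then f else 0) = if P then D f else 0 := by split_ifs <;> simp
  simp only [Derivation.sub_apply, Theta_X, map_sub, h, h2]
  clear h h2
  split_ifs <;> subst_vars <;> simp_all
  abel

lemma Xi_eq {n : ℕ} (a a' : Fin n) : Xi a a' = Theta a a - Theta a' a' := by
  simp only [Xi, Theta, ← Finset.sum_sub_distrib]
  exact Finset.sum_congr rfl fun k _ => by abel

/-- The identity matrix acts trivially. -/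
lemma sum_Theta_diag {n : ℕ} :
    ∑ a : Fin n, (Theta a a : Derivation ℂ (MatPoly n) (MatPoly n)) = 0 := by
  apply MvPolynomial.derivation_ext
  rintro ⟨i, j⟩
  simp [der_sum_apply, Theta_X]

/-- The field `X ↦ [X, X]` vanishes. -/
lemma sum_X_smul_Theta {n : ℕ} :
    ∑ a : Fin n, ∑ b : Fin n, (X (a, b) : MatPoly n) •
      (Theta a b : Derivation ℂ (MatPoly n) (MatPoly n)) = 0 := by
  apply MvPolynomial.derivation_ext
  rintro ⟨i, j⟩
  simp [der_sum_apply, Theta_X, mul_sub, Finset.sum_sub_distrib, mul_comm]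

lemma der_sub_smul {n : ℕ} (f g : MatPoly n) (D : Derivation ℂ (MatPoly n) (MatPoly n)) :
    (f - g) • D = f • D - g • D := by
  ext p
  simp [sub_mul]

lemma Theta_diag_X {n : ℕ} (k i : Fin n) : Theta k k (X (i, i)) = 0 := by
  rw [Theta_X]
  split_ifs with h <;> simp [h]

lemma lie_smul_smul {n : ℕ} (f g : MatPoly n) (D E : Derivation ℂ (MatPoly n) (MatPoly n)) :
    ⁅f • D, g • E⁆ = (f * D g) • E - (g * E f) • D + (f * g) • ⁅D, E⁆ := by
  ext p
  simp only [Derivation.commutator_apply, Derivation.smul_apply, Derivation.add_apply,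
    Derivation.sub_apply, Derivation.leibniz, smul_eq_mul]
  ring

/-- `n Θ_aa = ∑ b, (Θ_aa - Θ_bb)` because the `Θ_bb` sum to zero. -/
lemma Theta_diag_mem {n : ℕ} (M : Submodule ℂ (Derivation ℂ (MatPoly n) (MatPoly n)))
    (h : ∀ a b : Fin n, a ≠ b → Theta a a - Theta b b ∈ M) (a : Fin n) : Theta a a ∈ M := by
  have hn : (n : ℂ) ≠ 0 := by
    have := a.pos
    exact_mod_cast this.ne'
  have h1 : ∑ b : Fin n, (Theta a a - Theta b b) ∈ M := by
    refine M.sum_mem fun b _ => ?_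
    by_cases hab : a = b
    · simp [hab]
    · exact h a b hab
  rw [Finset.sum_sub_distrib, sum_Theta_diag, sub_zero, Finset.sum_const, Finset.card_univ,
    Fintype.card_fin, ← Nat.cast_smul_eq_nsmul ℂ] at h1
  exact (M.smul_mem_iff hn).1 h1

lemma Theta_mem {n : ℕ} (a b : Fin n) : Theta a b ∈ slFields n := by
  by_cases hab : a = b
  · subst hab
    have key : ∀ (k : ℕ) (a b : Fin n), (b : ℕ) = a + k →
        Theta a a - Theta b b ∈ slFields n := by
      intro k
      induction k with
      | zero =>
        intro a b h
        obtain rfl : b = a := Fin.ext h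
        simp
      | succ k ih =>
        intro a b h
        have hlt : (a : ℕ) + k < n := by have := b.2; omega
        have h1 := ih a ⟨a + k, hlt⟩ rfl
        have h2 : Theta ⟨a + k, hlt⟩ ⟨a + k, hlt⟩ - Theta b b ∈ slFields n :=
          Submodule.subset_span (Or.inr ⟨⟨a + k, hlt⟩, b, by simp [h]; omega, (Xi_eq _ _).symm⟩)
        simpa using add_mem h1 h2
    refine Theta_diag_mem _ (fun c d _ => ?_) a
    rcases le_total (c : ℕ) d with h | h
    · exact key (d - c) c d (by omega)
    · simpa using neg_mem (key (c - d) d c (by omega))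
  · exact Submodule.subset_span (Or.inl ⟨a, b, hab, rfl⟩)

lemma slFields_le {n : ℕ} {M : Submodule ℂ (Derivation ℂ (MatPoly n) (MatPoly n))}
    (h : ∀ a b : Fin n, Theta a b ∈ M) : slFields n ≤ M := by
  refine Submodule.span_le.2 ?_
  rintro D (⟨a, b, -, rfl⟩ | ⟨a, a', -, rfl⟩)
  · exact h a b
  · rw [Xi_eq]
    exact sub_mem (h _ _) (h _ _)

lemma slFields_lie {n : ℕ} {D E : Derivation ℂ (MatPoly n) (MatPoly n)}
    (hD : D ∈ slFields n) (hE : E ∈ slFields n) : ⁅D, E⁆ ∈ slFields n := by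
  have h1 : ∀ a b : Fin n, ⁅(Theta a b : Derivation ℂ (MatPoly n) (MatPoly n)), E⁆ ∈ slFields n := by
    intro a b
    refine slFields_le (M := (slFields n).comap
      (LieModule.toEnd ℂ _ (Derivation ℂ (MatPoly n) (MatPoly n)) (Theta a b))) ?_ hE
    intro c d
    change ⁅(Theta a b : Derivation ℂ (MatPoly n) (MatPoly n)), Theta c d⁆ ∈ slFields n
    rw [Theta_lie]
    refine sub_mem ?_ ?_ <;> split_ifs <;> simp [Theta_mem]
  rw [← lie_skew]
  refine neg_mem (slFields_le (M := (slFields n).comap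
    (LieModule.toEnd ℂ _ (Derivation ℂ (MatPoly n) (MatPoly n)) E)) ?_ hD)
  intro a b
  change ⁅E, (Theta a b : Derivation ℂ (MatPoly n) (MatPoly n))⁆ ∈ slFields n
  rw [← lie_skew]
  exact neg_mem (h1 a b)

/-- The algebra `slFields n` is perfect: it is spanned by the brackets of its generators. -/
lemma slFields_le_of_lie {n : ℕ} {M : Submodule ℂ (Derivation ℂ (MatPoly n) (MatPoly n))}
    (h : ∀ a b c d : Fin n,
      ⁅(Theta a b : Derivation ℂ (MatPoly n) (MatPoly n)), Theta c d⁆ ∈ M) :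
    slFields n ≤ M := by
  refine slFields_le fun a b => ?_
  by_cases hab : a = b
  · subst hab
    refine Theta_diag_mem _ (fun c d hcd => ?_) a
    have := h d c c d
    simpa [Theta_lie] using this
  · have := h a b a a
    simpa [Theta_lie, Ne.symm hab] using this

/-! ### Vanishing modulo a Lie algebra of traceless multiples -/

/-- The linear algebra of the induction step. Here `w a b v` stands for the class of
`F v Θ_ab` modulo a Lie algebra, for a fixed polynomial `F`; `Hdiag` and `Hrel` express
`∑ Θ_ii = 0` and `∑ x_ij Θ_ij = 0`. -/
lemma traceless_vanish {n : ℕ} {Q : Type*} [AddCommGroup Q] [Module ℂ Q]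
    (w : Fin n → Fin n → MatPoly n →ₗ[ℂ] Q)
    (H : ∀ i j a b c d, w a b (Theta c d (X (i, j))) + w c d (Theta a b (X (i, j))) = 0)
    (Hdiag : ∀ v, ∑ i, w i i v = 0)
    (Hrel : ∑ i, ∑ j, w i j (X (i, j)) = 0) :
    (∀ a b i j, i ≠ j → w a b (X (i, j)) = 0) ∧
      ∀ a b i j, w a b (X (i, i) - X (j, j)) = 0 := by
  have half : ∀ q : Q, q + q = 0 → q = 0 := fun q hq => by
    have : (2 : ℂ) • q = 0 := by rw [two_smul, hq]
    exact (smul_eq_zero.1 this).resolve_left two_ne_zero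
  have h1 : ∀ k i j, i ≠ j → w k k (X (i, j)) = 0 := by
    intro k i j hij
    by_cases hki : i = k
    · subst hki
      have := H i j i i i i
      simp only [Theta_X, hij.symm, if_true, if_false, sub_zero] at this
      exact half _ this
    · by_cases hkj : j = k
      · subst hkj
        have := H i j j j j j
        simp only [Theta_X, hij, if_true, if_false, zero_sub, map_neg] at this
        exact half _ (by rw [← neg_eq_zero, neg_add]; exact this)
      · have := H i j k k i i
        simpa [Theta_X, hki, hkj, hij.symm] using this
  have h2 : ∀ a b i j, i ≠ j → (i, j) ≠ (a, b) → w a b (X (i, j)) = 0 := by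
    intro a b i j hij hne
    by_cases hab : a = b
    · subst hab; exact h1 _ _ _ hij
    have := H i j a b i i
    simp only [Theta_X, hij.symm, if_true, if_false, sub_zero, map_sub] at this
    by_cases hia : i = a
    · subst hia
      have hjb : j ≠ b := fun h => hne (by rw [h])
      simpa [hjb, h1 i b j hjb.symm] using this
    · by_cases hjb : j = b
      · subst hjb
        simpa [hia, h1 i i a hia] using this
      · simpa [hia, hjb] using this
  have h3 : ∀ a b, a ≠ b → ∀ i j, w a b (X (i, i) - X (j, j)) = 0 := by
    intro a b hab i j
    by_cases hij : i = j
    · simp [hij]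
    have := H i j a b i j
    simp only [Theta_X, if_true] at this
    rw [← neg_eq_zero, ← map_neg, neg_sub]
    by_cases hia : i = a
    · subst hia
      by_cases hjb : j = b
      · subst hjb
        simp only [if_true] at this
        exact half _ this
      · simp only [if_true, hjb, if_false, sub_zero] at this
        rwa [h2 _ _ _ _ (Ne.symm hjb) (by simp [hab.symm]), add_zero] at this
    · by_cases hjb : j = b
      · subst hjb
        simp only [if_true, hia, if_false, zero_sub, map_neg] at this
        rwa [h2 _ _ _ _ hia (by simp [hab]), neg_zero, add_zero] at this
      · simpa [hia, hjb] using this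
  -- Up to sign, the diagonal classes reduce to the classes of `x_ab Θ_ab`.
  have h4 : ∀ a b, a ≠ b → ∀ c, w c c (X (b, b) - X (a, a)) =
      (if c = b then w a b (X (a, b)) else 0) - (if c = a then w a b (X (a, b)) else 0) := by
    intro a b hab c
    have := H a b a b c c
    simp only [Theta_X, if_true] at this
    by_cases hca : c = a
    · subst hca
      simp only [if_true, hab.symm, hab, if_false, sub_zero, zero_sub] at this ⊢
      exact eq_neg_of_add_eq_zero_right this
    · by_cases hcb : c = b
      · subst hcb
        simp only [if_true, hab, if_false, zero_sub, map_neg, hca, sub_zero] at this ⊢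
        exact (neg_add_eq_zero.1 this).symm
      · simpa [hca, hcb, Ne.symm hca, Ne.symm hcb] using this
  have h5 : ∀ a b c, a ≠ b → b ≠ c → w a b (X (a, b)) = w b c (X (b, c)) := by
    intro a b c hab hbc
    have e1 := h4 a b hab b
    have e2 := h4 b c hbc b
    have e3 : w b b (X (c, c) - X (a, a)) = 0 := by
      by_cases hac : a = c
      · simp [hac]
      · simpa [hbc, hab.symm] using h4 a c hac b
    simp only [if_true, hab.symm, hbc, if_false, sub_zero, zero_sub] at e1 e2
    have : w b b (X (c, c) - X (a, a)) =
        w b b (X (b, b) - X (a, a)) + w b b (X (c, c) - X (b, b)) := by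
      rw [← map_add]; congr 1; abel
    rw [e3, e1, e2] at this
    exact (add_neg_eq_zero.1 this.symm)
  have h6 : ∀ a b c d, a ≠ b → c ≠ d → w a b (X (a, b)) = w c d (X (c, d)) := by
    intro a b c d hab hcd
    by_cases hbc : b = c
    · subst hbc; exact h5 _ _ _ hab hcd
    · exact (h5 _ _ _ hab hbc).trans (h5 _ _ _ hbc hcd)
  have h7 : ∀ a b, a ≠ b → w a b (X (a, b)) = 0 := by
    intro a b hab
    have hn2 : 2 ≤ n := by
      have := a.2; have := b.2
      have : (a : ℕ) ≠ b := fun h => hab (Fin.ext h)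
      omega
    -- `Hrel` and `e1` below combine to `n (n - 1) (n + 1) z = 0`.
    set z := w a b (X (a, b)) with hz
    have hzz : ∀ c d, c ≠ d → w c d (X (c, d)) = z := fun c d h => h6 _ _ _ _ h hab
    have e1 : ∑ i, ∑ j, w i i (X (i, i) - X (j, j)) = (n : ℂ) • ∑ i, w i i (X (i, i)) := by
      simp only [map_sub, Finset.sum_sub_distrib]
      rw [Finset.sum_comm (f := fun i j => w i i (X (j, j)))]
      simp [Hdiag, Finset.smul_sum, Nat.cast_smul_eq_nsmul]
    have e2 : ∀ i j, w i i (X (i, i) - X (j, j)) = if j = i then 0 else z := by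
      intro i j
      split_ifs with h
      · simp [h]
      · simpa [Ne.symm h, hzz j i h] using h4 j i h i
    have e3 : ∀ i j, w i j (X (i, j)) =
        (if j = i then w i i (X (i, i)) else 0) + (if j = i then 0 else z) := by
      intro i j
      split_ifs with h
      · simp [h]
      · simp [hzz i j (Ne.symm h)]
    have e4 : ∑ i : Fin n, ∑ j : Fin n, (if j = i then (0 : Q) else z) =
        ((n : ℂ) * ((n : ℂ) - 1)) • z := by
      have : ∀ i j : Fin n, (if j = i then (0 : Q) else z) = z - if j = i then z else 0 := by
        intro i j; split_ifs <;> simp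
      simp only [this, Finset.sum_sub_distrib, Finset.sum_ite_eq', Finset.mem_univ, if_true,
        Finset.sum_const, Finset.card_univ, Fintype.card_fin, ← Nat.cast_smul_eq_nsmul ℂ]
      module
    simp only [e2, e4] at e1
    rw [Finset.sum_congr rfl fun i _ => Finset.sum_congr rfl fun j _ => e3 i j] at Hrel
    simp only [Finset.sum_add_distrib, e4, Finset.sum_ite_eq', Finset.mem_univ, if_true]
      at Hrel
    have e5 : ((n : ℂ) * ((n : ℂ) - 1) * ((n : ℂ) + 1)) • z = 0 := by
      have e6 := congrArg (fun q => (n : ℂ) • q) Hrel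
      simp only [smul_add, ← e1, smul_zero] at e6
      rw [← e6]
      module
    refine (smul_eq_zero.1 e5).resolve_left ?_
    have a1 : (n : ℂ) ≠ 0 := by exact_mod_cast (by omega : n ≠ 0)
    have a2 : (n : ℂ) - 1 ≠ 0 := by
      rw [sub_ne_zero]; exact_mod_cast (by omega : n ≠ 1)
    have a3 : (n : ℂ) + 1 ≠ 0 := by exact_mod_cast (by omega : n + 1 ≠ 0)
    exact mul_ne_zero (mul_ne_zero a1 a2) a3
  refine ⟨fun a b i j hij => ?_, fun a b i j => ?_⟩
  · by_cases h : (i, j) = (a, b)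
    · obtain ⟨rfl, rfl⟩ := Prod.mk.injEq _ _ _ _ ▸ h
      exact h7 _ _ hij
    · exact h2 a b i j hij h
  · by_cases hab : a = b
    · subst hab
      by_cases hij : j = i
      · simp [hij]
      · rw [h4 j i hij, h7 j i hij]; simp
    · exact h3 a b hab i j

/-! ### Degrees one and two -/

lemma smul_mem_of_span {n : ℕ} (M : Submodule ℂ (Derivation ℂ (MatPoly n) (MatPoly n)))
    {s : Set (MatPoly n)} {D : Derivation ℂ (MatPoly n) (MatPoly n)}
    (h : ∀ f ∈ s, f • D ∈ M) : ∀ f ∈ Submodule.span ℂ s, f • D ∈ M := by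
  intro f hf
  induction hf using Submodule.span_induction with
  | mem f hf => exact h f hf
  | zero => simp
  | add f g _ _ hf hg => rw [add_smul]; exact add_mem hf hg
  | smul c f _ hf => rw [smul_assoc]; exact M.smul_mem c hf

/-- The fields `D` with `f • D ∈ M`, as a subspace. -/
def smulComap {n : ℕ} (M : Submodule ℂ (Derivation ℂ (MatPoly n) (MatPoly n))) (f : MatPoly n) :
    Submodule ℂ (Derivation ℂ (MatPoly n) (MatPoly n)) where
  carrier := {D | f • D ∈ M}
  add_mem' {D E} hD hE := by
    simp only [Set.mem_ofPred_eq, smul_add] at *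
    exact add_mem hD hE
  zero_mem' := by simp
  smul_mem' c D hD := by
    simp only [Set.mem_ofPred_eq] at *
    rw [smul_comm]
    exact M.smul_mem c hD

/-- The witness is `[p D, q r E] - [p q D, r E]`. -/
lemma overshear_trick {n : ℕ} (A : LieSubalgebra ℂ (Derivation ℂ (MatPoly n) (MatPoly n)))
    {p q r : MatPoly n} {D E : Derivation ℂ (MatPoly n) (MatPoly n)}
    (h1 : p • D ∈ A) (h2 : (q * r) • E ∈ A) (h3 : (p * q) • D ∈ A) (h4 : r • E ∈ A) :
    (p * r * E q) • D + (p * r * D q) • E ∈ A := by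
  have := sub_mem (A.lie_mem h1 h2) (A.lie_mem h3 h4)
  convert this using 1
  rw [lie_smul_smul, lie_smul_smul, Derivation.leibniz, Derivation.leibniz]
  simp only [smul_eq_mul]
  module

lemma overshear_trick_one {n : ℕ} (A : LieSubalgebra ℂ (Derivation ℂ (MatPoly n) (MatPoly n)))
    {q r : MatPoly n} {D E : Derivation ℂ (MatPoly n) (MatPoly n)}
    (h1 : D ∈ A) (h2 : (q * r) • E ∈ A) (h3 : q • D ∈ A) (h4 : r • E ∈ A) :
    (r * E q) • D + (r * D q) • E ∈ A := by
  have := overshear_trick A (p := 1) (by simpa using h1) h2 (by simpa using h3) h4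
  simpa using this

/-- The bracket `[D, f E]`. -/
lemma act_mem {n : ℕ} (A : LieSubalgebra ℂ (Derivation ℂ (MatPoly n) (MatPoly n)))
    {f : MatPoly n} {D E : Derivation ℂ (MatPoly n) (MatPoly n)}
    (h1 : D ∈ A) (h2 : f • E ∈ A) : (D f) • E + f • ⁅D, E⁆ ∈ A := by
  have := A.lie_mem h1 h2
  have e := lie_smul_smul (1 : MatPoly n) f D E
  simp only [one_smul, one_mul, Derivation.map_one_eq_zero, mul_zero, zero_smul, sub_zero] at e
  rwa [e] at this

lemma degree_one {n : ℕ} (A : LieSubalgebra ℂ (Derivation ℂ (MatPoly n) (MatPoly n)))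
    (h0 : ∀ a b : Fin n, Theta a b ∈ A)
    (h1 : ∀ i a b : Fin n, (X (i, i) : MatPoly n) • Theta a b ∈ A) (i j a b : Fin n) :
    (X (i, j) : MatPoly n) • Theta a b ∈ A := by
  have hd : ∀ i j k : Fin n, (X (i, j) : MatPoly n) • Theta k k ∈ A := by
    intro i j k
    by_cases hij : i = j
    · subst hij; exact h1 _ _ _
    have h := act_mem A (h0 j i) (h1 j k k)
    have h' : (X (j, j) : MatPoly n) • ⁅(Theta j i : Derivation ℂ (MatPoly n) (MatPoly n)),
        Theta k k⁆ ∈ A := by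
      rw [Theta_lie, smul_sub]
      refine sub_mem ?_ ?_ <;> split_ifs <;> simp [h1]
    have := sub_mem h h'
    simpa [Theta_X, Ne.symm hij] using this
  by_cases hab : a = b
  · subst hab; exact hd _ _ _
  have h := act_mem A (h0 a b) (hd i j a)
  have h' : (Theta a b (X (i, j) : MatPoly n)) • Theta a a ∈ A := by
    rw [Theta_X, der_sub_smul]
    refine sub_mem ?_ ?_ <;> split_ifs <;> simp [hd]
  have := sub_mem h h'
  simpa [Theta_lie, Ne.symm hab] using this

/-- Off-diagonal entries come from diagonal ones, since `Θ_ba (x_bb) = x_ab`; so the products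
`x_ii x_jj Θ_kk` suffice to produce everything of degree two. -/
lemma degree_two {n : ℕ} (A : LieSubalgebra ℂ (Derivation ℂ (MatPoly n) (MatPoly n)))
    (h0 : ∀ a b : Fin n, Theta a b ∈ A)
    (h1 : ∀ i j a b : Fin n, (X (i, j) : MatPoly n) • Theta a b ∈ A)
    (h2 : ∀ i j k : Fin n, (X (i, i) * X (j, j) : MatPoly n) • Theta k k ∈ A)
    (i j k l a b : Fin n) :
    (X (i, j) * X (k, l) : MatPoly n) • Theta a b ∈ A := by
  have hd : ∀ i j l k : Fin n, (X (i, i) * X (j, l) : MatPoly n) • Theta k k ∈ A := by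
    intro i j l k
    by_cases hjl : j = l
    · subst hjl; exact h2 _ _ _
    have := overshear_trick_one A (h0 l j) (h2 l i k) (h1 _ _ _ _) (h1 _ _ _ _)
    have e : Theta k k (X (l, l) : MatPoly n) = 0 := Theta_diag_X k l
    simpa [e, Theta_X, Ne.symm hjl] using this
  have hT : ∀ i j l a b k : Fin n,
      (X (i, i) * Theta a b (X (j, l)) : MatPoly n) • Theta k k ∈ A := by
    intro i j l a b k
    rw [Theta_X, mul_sub, der_sub_smul]
    refine sub_mem ?_ ?_ <;> split_ifs <;> simp [hd]
  have hdd : ∀ i j l a b : Fin n, (X (i, i) * X (j, l) : MatPoly n) • Theta a b ∈ A := by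
    intro i j l a b
    by_cases hab : a = b
    · subst hab; exact hd _ _ _ _
    by_cases hjl : j = l
    · subst hjl
      have h := act_mem A (h0 a b) (h2 i j a)
      rw [Derivation.leibniz, smul_eq_mul, smul_eq_mul, add_smul] at h
      have := sub_mem h (add_mem (hT i j j a b a) (hT j i i a b a))
      simpa [Theta_lie, Ne.symm hab] using this
    · have h := overshear_trick_one A (h0 a b) (q := X (j, l)) (r := X (i, i)) (E := Theta j j)
        (by rw [mul_comm]; exact hd _ _ _ _) (h1 _ _ _ _) (h1 _ _ _ _)
      have := sub_mem h (hT i j l a b j)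
      simpa [Theta_X, Ne.symm hjl] using this
  by_cases hij : i = j
  · subst hij; exact hdd _ _ _ _ _
  have h := act_mem A (h0 j i) (hdd j k l a b)
  rw [Derivation.leibniz, smul_eq_mul, smul_eq_mul, add_smul] at h
  have e1 : (X (j, j) * Theta j i (X (k, l)) : MatPoly n) • Theta a b ∈ A := by
    rw [Theta_X, mul_sub, der_sub_smul]
    refine sub_mem ?_ ?_ <;> split_ifs <;> simp [hdd]
  have e2 : (X (j, j) * X (k, l) : MatPoly n) •
      ⁅(Theta j i : Derivation ℂ (MatPoly n) (MatPoly n)), Theta a b⁆ ∈ A := by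
    rw [Theta_lie, smul_sub]
    refine sub_mem ?_ ?_ <;> split_ifs <;> simp [hdd]
  have := sub_mem (sub_mem h e2) e1
  simpa [Theta_X, Ne.symm hij, mul_comm] using this

/-! ### Linear forms and the trace -/

/-- The space of linear forms in the matrix entries. -/
noncomputable def linForms (n : ℕ) : Submodule ℂ (MatPoly n) :=
  Submodule.span ℂ (Set.range X)

/-- The linear forms vanishing at the identity matrix: combinations of off-diagonal entries
and of differences of diagonal entries. -/
noncomputable def tracelessForms (n : ℕ) : Submodule ℂ (MatPoly n) :=
  Submodule.span ℂ {v | (∃ i j : Fin n, i ≠ j ∧ v = X (i, j)) ∨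
    ∃ i j : Fin n, v = X (i, i) - X (j, j)}

/-- The trace of the generic matrix. -/
noncomputable def trX (n : ℕ) : MatPoly n := ∑ i : Fin n, X (i, i)

lemma X_mem_linForms {n : ℕ} (p : Fin n × Fin n) : X p ∈ linForms n :=
  Submodule.subset_span ⟨p, rfl⟩

lemma trX_mem_linForms (n : ℕ) : trX n ∈ linForms n :=
  Submodule.sum_mem _ fun _ _ => X_mem_linForms _

lemma Theta_trX {n : ℕ} (a b : Fin n) : Theta a b (trX n) = 0 := by
  simp [trX, Theta_X]

lemma Theta_mem_tracelessForms {n : ℕ} (a b : Fin n) {f : MatPoly n} (hf : f ∈ linForms n) :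
    Theta a b f ∈ tracelessForms n := by
  induction hf using Submodule.span_induction with
  | zero => simp
  | add f g _ _ hf hg => rw [map_add]; exact add_mem hf hg
  | smul c f _ hf => rw [Derivation.map_smul]; exact Submodule.smul_mem _ c hf
  | mem f hf =>
    obtain ⟨⟨i, j⟩, rfl⟩ := hf
    have off : ∀ i j : Fin n, i ≠ j → X (i, j) ∈ tracelessForms n := fun i j h =>
      Submodule.subset_span (Or.inl ⟨i, j, h, rfl⟩)
    have dif : ∀ i j : Fin n, X (i, i) - X (j, j) ∈ tracelessForms n := fun i j =>
      Submodule.subset_span (Or.inr ⟨i, j, rfl⟩)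
    rw [Theta_X]
    by_cases hia : i = a <;> by_cases hjb : j = b
    · subst hia hjb; simpa using dif j i
    · simpa [hia, hjb] using off b j (Ne.symm hjb)
    · simpa [hia, hjb] using off i a hia
    · simp [hia, hjb]

/-- Every linear form is a traceless one plus a multiple of the trace. -/
lemma linForms_decomp {n : ℕ} {f : MatPoly n} (hf : f ∈ linForms n) :
    ∃ v ∈ tracelessForms n, ∃ c : ℂ, f = v + c • trX n := by
  induction hf using Submodule.span_induction with
  | zero => exact ⟨0, zero_mem _, 0, by simp⟩
  | add f g _ _ hf hg =>
    obtain ⟨v, hv, c, rfl⟩ := hf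
    obtain ⟨w, hw, d, rfl⟩ := hg
    exact ⟨v + w, add_mem hv hw, c + d, by module⟩
  | smul c f _ hf =>
    obtain ⟨v, hv, d, rfl⟩ := hf
    exact ⟨c • v, Submodule.smul_mem _ _ hv, c * d, by module⟩
  | mem f hf =>
    obtain ⟨⟨i, j⟩, rfl⟩ := hf
    by_cases hij : i = j
    · subst hij
      have hn : (n : ℂ) ≠ 0 := by exact_mod_cast i.pos.ne'
      refine ⟨(n : ℂ)⁻¹ • ∑ k : Fin n, (X (i, i) - X (k, k)), Submodule.smul_mem _ _
        (Submodule.sum_mem _ fun k _ => Submodule.subset_span (Or.inr ⟨i, k, rfl⟩)), (n : ℂ)⁻¹, ?_⟩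
      rw [← smul_add, Finset.sum_sub_distrib, trX, sub_add_cancel, Finset.sum_const,
        Finset.card_univ, Fintype.card_fin, ← Nat.cast_smul_eq_nsmul ℂ, smul_smul,
        inv_mul_cancel₀ hn, one_smul]
    · exact ⟨_, Submodule.subset_span (Or.inl ⟨i, j, hij, rfl⟩), 0, by simp⟩

/-- If `g` is homogeneous, every term of `Θ_ab (g)` has a traceless linear factor. The extra factor
`y` keeps the exponent at `k`, which avoids a subtraction. -/
lemma Theta_mul_mem {n : ℕ} (a b : Fin n) {y : MatPoly n} (hy : y ∈ linForms n) (k : ℕ) :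
    ∀ g ∈ linForms n ^ k, Theta a b g * y ∈ linForms n ^ k * tracelessForms n := by
  induction k with
  | zero =>
    intro g hg
    obtain ⟨c, rfl⟩ := Submodule.mem_one.1 (by rwa [pow_zero] at hg)
    simp
  | succ k ih =>
    intro g hg
    rw [pow_succ] at hg
    induction hg using Submodule.mul_induction_on' with
    | add f _ g _ hf hg => rw [map_add, add_mul]; exact add_mem hf hg
    | mem_mul_mem g hg x hx =>
      rw [Derivation.leibniz, smul_eq_mul, smul_eq_mul, add_mul]
      refine add_mem ?_ ?_
      · have := Submodule.mul_mem_mul (Theta_mem_tracelessForms a b hx)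
          (Submodule.mul_mem_mul hg hy)
        rw [← pow_succ, mul_comm (tracelessForms n)] at this
        convert this using 1; ring
      · have := Submodule.mul_mem_mul (ih g hg) hx
        rw [mul_right_comm, ← pow_succ] at this
        convert this using 1; ring

/-! ### Induction on the degree -/

lemma mul_traceless_mem {n : ℕ} (A : LieSubalgebra ℂ (Derivation ℂ (MatPoly n) (MatPoly n)))
    (F : MatPoly n)
    (H : ∀ i j a b c d : Fin n, (F * Theta c d (X (i, j))) • Theta a b +
      (F * Theta a b (X (i, j))) • Theta c d ∈ A)
    {v : MatPoly n} (hv : v ∈ tracelessForms n) {D : Derivation ℂ (MatPoly n) (MatPoly n)}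
    (hD : D ∈ slFields n) : (F * v) • D ∈ A := by
  let w : Fin n → Fin n → MatPoly n →ₗ[ℂ]
      (Derivation ℂ (MatPoly n) (MatPoly n) ⧸ A.toSubmodule) := fun a b =>
    A.toSubmodule.mkQ ∘ₗ ((LinearMap.toSpanSingleton (MatPoly n) _ (Theta a b)).restrictScalars ℂ)
      ∘ₗ LinearMap.mulLeft ℂ F
  have hw : ∀ a b v, w a b v = A.toSubmodule.mkQ ((F * v) • Theta a b) := fun _ _ _ => rfl
  obtain ⟨h1, h2⟩ := traceless_vanish w
    (by
      intro i j a b c d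
      rw [hw, hw, ← map_add]
      exact (Submodule.Quotient.mk_eq_zero _).2 (H i j a b c d))
    (by
      intro v
      simp only [hw]
      rw [← map_sum, ← Finset.smul_sum, sum_Theta_diag, smul_zero, map_zero])
    (by
      simp only [hw, mul_smul]
      simp only [← map_sum, ← Finset.smul_sum]
      rw [sum_X_smul_Theta, smul_zero, map_zero])
  simp only [hw, Submodule.mkQ_apply, Submodule.Quotient.mk_eq_zero] at h1 h2
  refine slFields_le (M := smulComap A.toSubmodule (F * v)) (fun a b => ?_) hD
  change (F * v) • Theta a b ∈ A.toSubmodule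
  rw [mul_comm, mul_smul]
  have key : ∀ v ∈ tracelessForms n, v • (F • Theta a b) ∈ A.toSubmodule := by
    refine smul_mem_of_span _ ?_
    rintro v (⟨i, j, hij, rfl⟩ | ⟨i, j, rfl⟩)
    · rw [← mul_smul, mul_comm]; exact h1 a b i j hij
    · rw [← mul_smul, mul_comm]; exact h2 a b i j
  exact key v hv

/-- The passage from degrees at most `d + 2` to degree `d + 3`. Degree at least three is needed to
split a monomial into three nonconstant factors in `overshear_trick`. -/
lemma step {n : ℕ} (A : LieSubalgebra ℂ (Derivation ℂ (MatPoly n) (MatPoly n))) (d : ℕ)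
    (hP : ∀ k ≤ d + 2, ∀ f ∈ linForms n ^ k, ∀ D ∈ slFields n, f • D ∈ A) :
    ∀ f ∈ linForms n ^ (d + 3), ∀ D ∈ slFields n, f • D ∈ A := by
  have h1 : ∀ F ∈ linForms n ^ (d + 2), ∀ i j a b c e : Fin n,
      (F * Theta c e (X (i, j))) • Theta a b + (F * Theta a b (X (i, j))) • Theta c e ∈ A := by
    intro F hF i j a b c e
    rw [pow_succ] at hF
    induction hF using Submodule.mul_induction_on' with
    | add f _ g _ hf hg =>
      have := add_mem hf hg
      convert this using 1
      module
    | mem_mul_mem p hp r hr =>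
      have hx : (X (i, j) : MatPoly n) ∈ linForms n := X_mem_linForms _
      refine overshear_trick A (hP (d + 1) (by omega) p hp _ (Theta_mem _ _))
        (hP 2 (by omega) _ ?_ _ (Theta_mem _ _)) (hP (d + 2) le_rfl _ ?_ _ (Theta_mem _ _))
        (hP 1 (by omega) r (by simpa using hr) _ (Theta_mem _ _))
      · rw [pow_two]; exact Submodule.mul_mem_mul hx hr
      · rw [pow_succ]; exact Submodule.mul_mem_mul hp hx
  have h2 : ∀ f ∈ linForms n ^ (d + 2) * tracelessForms n, ∀ D ∈ slFields n, f • D ∈ A := by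
    intro f hf D hD
    induction hf using Submodule.mul_induction_on' with
    | add f _ g _ hf hg => rw [add_smul]; exact add_mem hf hg
    | mem_mul_mem F hF v hv => exact mul_traceless_mem A F (h1 F hF) hv hD
  have h3 : ∀ F ∈ linForms n ^ (d + 2), ∀ D ∈ slFields n, (F * trX n) • D ∈ A := by
    intro F hF D hD
    refine slFields_le_of_lie (M := smulComap A.toSubmodule (F * trX n)) (fun a b c e => ?_) hD
    change (F * trX n) • ⁅(Theta a b : Derivation ℂ (MatPoly n) (MatPoly n)), Theta c e⁆ ∈ A
    -- `[F Θ_ab, (tr X) Θ_ce] = F (tr X) [Θ_ab, Θ_ce] - (tr X) Θ_ce(F) Θ_ab`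
    have e1 := A.lie_mem (hP (d + 2) le_rfl F hF _ (Theta_mem a b))
      (hP 1 (by omega) (trX n) (by simpa using trX_mem_linForms n) _ (Theta_mem c e))
    have e2 := h2 _ (Theta_mul_mem c e (trX_mem_linForms n) _ F hF) _ (Theta_mem a b)
    rw [lie_smul_smul, Theta_trX, mul_comm (trX n)] at e1
    simpa using add_mem e1 e2
  intro f hf D hD
  rw [pow_succ] at hf
  induction hf using Submodule.mul_induction_on' with
  | add f _ g _ hf hg => rw [add_smul]; exact add_mem hf hg
  | mem_mul_mem F hF x hx =>
    obtain ⟨v, hv, c, rfl⟩ := linForms_decomp hx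
    rw [mul_add, add_smul, mul_smul_comm, smul_assoc]
    exact add_mem (h2 _ (Submodule.mul_mem_mul hF hv) D hD) (A.smul_mem c (h3 F hF D hD))

lemma all_mem {n : ℕ} (A : LieSubalgebra ℂ (Derivation ℂ (MatPoly n) (MatPoly n)))
    (h0 : ∀ a b : Fin n, Theta a b ∈ A)
    (h1 : ∀ i a b : Fin n, (X (i, i) : MatPoly n) • Theta a b ∈ A)
    (h2 : ∀ i j k : Fin n, (X (i, i) * X (j, j) : MatPoly n) • Theta k k ∈ A)
    (f : MatPoly n) {D : Derivation ℂ (MatPoly n) (MatPoly n)} (hD : D ∈ slFields n) :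
    f • D ∈ A := by
  have hP : ∀ k, ∀ f ∈ linForms n ^ k, ∀ D ∈ slFields n, f • D ∈ A := by
    intro k
    induction k using Nat.strong_induction_on with
    | _ k ih =>
      match k with
      | 0 =>
        intro f hf D hD
        obtain ⟨c, rfl⟩ := Submodule.mem_one.1 (by rwa [pow_zero] at hf)
        rw [algebraMap_smul]
        exact A.smul_mem c (slFields_le (M := A.toSubmodule) h0 hD)
      | 1 =>
        intro f hf D hD
        rw [pow_one] at hf
        refine slFields_le (M := smulComap A.toSubmodule f) (fun a b => ?_) hD
        refine smul_mem_of_span A.toSubmodule ?_ f hf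
        rintro _ ⟨⟨i, j⟩, rfl⟩
        exact degree_one A h0 h1 i j a b
      | 2 =>
        intro f hf D hD
        rw [pow_two, linForms, Submodule.span_mul_span] at hf
        refine slFields_le (M := smulComap A.toSubmodule f) (fun a b => ?_) hD
        refine smul_mem_of_span A.toSubmodule ?_ f hf
        rintro _ ⟨_, ⟨⟨i, j⟩, rfl⟩, _, ⟨⟨k, l⟩, rfl⟩, rfl⟩
        exact degree_two A h0 (degree_one A h0 h1) h2 i j k l a b
      | d + 3 => exact step A d fun k hk => ih k (by omega)
  have hf : f ∈ ⨆ k, linForms n ^ k := by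
    induction f using MvPolynomial.induction_on with
    | C c => exact Submodule.mem_iSup_of_mem 0 (by simp)
    | add f g hf hg => exact add_mem hf hg
    | mul_X f p hf =>
      induction hf using Submodule.iSup_induction' with
      | mem k f hf =>
        refine Submodule.mem_iSup_of_mem (k + 1) ?_
        rw [pow_succ]
        exact Submodule.mul_mem_mul hf (X_mem_linForms p)
      | zero => simp
      | add f g _ _ hf hg => rw [add_mul]; exact add_mem hf hg
  induction hf using Submodule.iSup_induction' with
  | mem k f hf => exact hP k f hf D hD
  | zero => simp
  | add f g _ _ hf hg => rw [add_smul]; exact add_mem hf hg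

/-! ### The Lie algebra of polynomial multiples -/

/-- The polynomial multiples of fundamental fields form a Lie algebra. -/
noncomputable def multiples (n : ℕ) :
    LieSubalgebra ℂ (Derivation ℂ (MatPoly n) (MatPoly n)) where
  __ := Submodule.span ℂ { D | ∃ f : MatPoly n, ∃ Θ ∈ slFields n, D = f • Θ }
  lie_mem' {D E} hD hE := by
    change D ∈ Submodule.span ℂ _ at hD
    change E ∈ Submodule.span ℂ _ at hE
    change ⁅D, E⁆ ∈ Submodule.span ℂ _
    induction hD using Submodule.span_induction with
    | zero =>
      rw [show ⁅(0 : Derivation ℂ (MatPoly n) (MatPoly n)), E⁆ = 0 from zero_lie E]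
      exact zero_mem _
    | add D D' _ _ h h' =>
      rw [show ⁅D + D', E⁆ = ⁅D, E⁆ + ⁅D', E⁆ from add_lie D D' E]
      exact add_mem h h'
    | smul c D _ h =>
      rw [show ⁅c • D, E⁆ = c • ⁅D, E⁆ from smul_lie c D E]
      exact Submodule.smul_mem _ c h
    | mem D hD =>
      obtain ⟨f, Θ, hΘ, rfl⟩ := hD
      induction hE using Submodule.span_induction with
      | zero =>
        rw [show ⁅f • Θ, (0 : Derivation ℂ (MatPoly n) (MatPoly n))⁆ = 0 from lie_zero (f • Θ)]
        exact zero_mem _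
      | add D D' _ _ h h' =>
        rw [show ⁅f • Θ, D + D'⁆ = ⁅f • Θ, D⁆ + ⁅f • Θ, D'⁆ from lie_add (f • Θ) D D']
        exact add_mem h h'
      | smul c D _ h =>
        rw [show ⁅f • Θ, c • D⁆ = c • ⁅f • Θ, D⁆ from lie_smul c (f • Θ) D]
        exact Submodule.smul_mem _ c h
      | mem E hE =>
        obtain ⟨g, Ψ, hΨ, rfl⟩ := hE
        rw [lie_smul_smul]
        exact add_mem (sub_mem (Submodule.subset_span ⟨_, Ψ, hΨ, rfl⟩)
          (Submodule.subset_span ⟨_, Θ, hΘ, rfl⟩))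
          (Submodule.subset_span ⟨_, _, slFields_lie hΘ hΨ, rfl⟩)

theorem stmt_6 {n : ℕ} (hn : 2 ≤ n)
    (Ln : Submodule ℂ (Derivation ℂ (MatPoly n) (MatPoly n)))
    (hLn : Ln = Submodule.span ℂ
      { D | ∃ f : MatPoly n, ∃ Θ ∈ slFields n, D = f • Θ })
    (An : LieSubalgebra ℂ (Derivation ℂ (MatPoly n) (MatPoly n)))
    (hAn : An = LieSubalgebra.lieSpan ℂ (Derivation ℂ (MatPoly n) (MatPoly n))
      { D | ∃ Θ ∈ slFields n, ∃ α : (Fin n × Fin n) →₀ ℕ,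
        (α.sum fun _ e => e) ≤ 2 ∧ Θ (Θ (monomial α (1 : ℂ))) = 0 ∧
        D = (monomial α (1 : ℂ)) • Θ }) :
    (Ln : Set (Derivation ℂ (MatPoly n) (MatPoly n))) = (An : Set _) := by
  subst hLn hAn
  apply Set.Subset.antisymm
  · refine Submodule.span_le.2 ?_
    rintro _ ⟨f, Θ, hΘ, rfl⟩
    set A := LieSubalgebra.lieSpan ℂ (Derivation ℂ (MatPoly n) (MatPoly n))
      { D | ∃ Θ ∈ slFields n, ∃ α : (Fin n × Fin n) →₀ ℕ,
        (α.sum fun _ e => e) ≤ 2 ∧ Θ (Θ (monomial α (1 : ℂ))) = 0 ∧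
        D = (monomial α (1 : ℂ)) • Θ } with hA
    have gen : ∀ (a b : Fin n) (α : (Fin n × Fin n) →₀ ℕ), (α.sum fun _ e => e) ≤ 2 →
        Theta a b (Theta a b (monomial α (1 : ℂ))) = 0 →
        (monomial α (1 : ℂ)) • Theta a b ∈ A := fun a b α h1 h2 =>
      LieSubalgebra.subset_lieSpan ⟨_, Theta_mem a b, α, h1, h2, rfl⟩
    refine all_mem A (fun a b => ?_) (fun i a b => ?_) (fun i j k => ?_) f hΘ
    · have := gen a b 0 (by simp) (by simp [← C_apply])
      simpa [← C_apply] using this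
    · refine gen a b (Finsupp.single (i, i) 1) (by simp) ?_
      change Theta a b (Theta a b (X (i, i))) = 0
      rw [Theta_X]
      by_cases hia : i = a <;> by_cases hib : i = b
      · subst hia; subst hib; simp
      · subst hia; simp [hib, Ne.symm hib, Theta_X]
      · subst hib; simp [hia, Ne.symm hia, Theta_X]
      · simp [hia, hib]
    · have e : (X (i, i) * X (j, j) : MatPoly n) =
          monomial (Finsupp.single (i, i) 1 + Finsupp.single (j, j) 1) (1 : ℂ) := by
        simp [X, monomial_mul]
      rw [e]
      refine gen k k _ ?_ ?_
      · rw [Finsupp.sum_add_index'] <;> simp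
      · rw [← e]
        simp [Derivation.leibniz, Theta_diag_X]
  · have : LieSubalgebra.lieSpan ℂ (Derivation ℂ (MatPoly n) (MatPoly n))
      { D | ∃ Θ ∈ slFields n, ∃ α : (Fin n × Fin n) →₀ ℕ,
        (α.sum fun _ e => e) ≤ 2 ∧ Θ (Θ (monomial α (1 : ℂ))) = 0 ∧
        D = (monomial α (1 : ℂ)) • Θ } ≤ multiples n := by
      refine LieSubalgebra.lieSpan_le.2 ?_
      rintro _ ⟨Θ, hΘ, α, -, -, rfl⟩
      exact Submodule.subset_span ⟨_, Θ, hΘ, rfl⟩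
    exact this
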